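/- Let P ≥ 1, 1 ≤ n < P, and let F ⊆ Fin P with |F| = P − n, and U any unitary on a finite-dimensional complex target space. Let S ⊆ (Fin P → Bool) be a set of control strings with |S| = 2^n all agreeing on every coordinate of F with common pattern ã. Then the product over S (in any order) of the controlled-U gates C_a(U) = |a⟩⟨a| ⊗ U + (1 − |a⟩⟨a|) ⊗ 1 equals Q ⊗ U + (1 − Q) ⊗ 1, where Q = ∑_{b : b i = ã i for all i ∈ F} |b⟩⟨b|. In particular, 2^n shift operations controlled on a subcube of data items can be combined into a single shift controlled only on the fixed bits. -/

import Mathlib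

/-!
The projectors `|a⟩⟨a|` are pairwise orthogonal, so in the product of two gates controlled on
orthogonal projectors `p` and `q` the `U * U` term `p q ⊗ U²` vanishes, and the product is the gate
controlled on `p + q` (`ctrl_mul_of_orthogonal`). By induction, the product over a duplicate-free
list is the gate controlled on the sum of the projectors of its members (`prod_ctrlU`). Finally, the
subcube has exactly `2 ^ n` elements (`card_subcube`), so `S`, which is contained in it and has the
same cardinality, is the whole subcube.
-/

open Matrix
open scoped Kronecker

/-- The rank-one orthogonal projector `|a⟩⟨a|` onto the computational basis state
indexed by the binary string `a : Fin P → Bool`. -/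
noncomputable def ketBraProj (P : ℕ) (a : Fin P → Bool) :
    Matrix (Fin P → Bool) (Fin P → Bool) ℂ :=
  Matrix.of fun x y => if x = a ∧ y = a then 1 else 0

/-- The multi-controlled-`U` gate with control string `a`:
`C_a(U) = |a⟩⟨a| ⊗ U + (1 - |a⟩⟨a|) ⊗ 1`. -/
noncomputable def ctrlU (P : ℕ) {γ : Type*} [Fintype γ] [DecidableEq γ]
    (a : Fin P → Bool) (U : Matrix γ γ ℂ) :
    Matrix ((Fin P → Bool) × γ) ((Fin P → Bool) × γ) ℂ :=
  ketBraProj P a ⊗ₖ U + (1 - ketBraProj P a) ⊗ₖ 1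

lemma ketBraProj_eq_single (P : ℕ) (a : Fin P → Bool) :
    ketBraProj P a = Matrix.single a a 1 := by
  ext x y
  simp [ketBraProj, Matrix.single_apply, eq_comm]

lemma ketBraProj_mul_of_ne (P : ℕ) {a b : Fin P → Bool} (h : a ≠ b) :
    ketBraProj P a * ketBraProj P b = 0 := by
  rw [ketBraProj_eq_single, ketBraProj_eq_single, Matrix.single_mul_single_of_ne _ _ _ _ h]

/-- Gates controlled on `p` and `q` with `p * q = 0` compose to the gate controlled on `p + q`. -/
lemma ctrl_mul_of_orthogonal {α γ : Type*} [Fintype α] [DecidableEq α] [Fintype γ] [DecidableEq γ]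
    (p q : Matrix α α ℂ) (U : Matrix γ γ ℂ) (h : p * q = 0) :
    (p ⊗ₖ U + (1 - p) ⊗ₖ (1 : Matrix γ γ ℂ)) * (q ⊗ₖ U + (1 - q) ⊗ₖ (1 : Matrix γ γ ℂ))
      = (p + q) ⊗ₖ U + (1 - (p + q)) ⊗ₖ (1 : Matrix γ γ ℂ) := by
  have h₁ : p * (1 - q) = p := by rw [mul_sub, h, mul_one, sub_zero]
  have h₂ : (1 - p) * q = q := by rw [sub_mul, h, one_mul, sub_zero]
  have h₃ : (1 - p) * (1 - q) = 1 - (p + q) := by rw [mul_sub, h₂, mul_one]; abel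
  rw [add_mul, mul_add, mul_add, ← Matrix.mul_kronecker_mul, ← Matrix.mul_kronecker_mul,
    ← Matrix.mul_kronecker_mul, ← Matrix.mul_kronecker_mul, h, h₁, h₂, h₃,
    Matrix.zero_kronecker, mul_one, one_mul, mul_one, zero_add, Matrix.add_kronecker, add_assoc]

lemma prod_ctrlU (P : ℕ) {γ : Type*} [Fintype γ] [DecidableEq γ] (U : Matrix γ γ ℂ)
    (l : List (Fin P → Bool)) (hl : l.Nodup) :
    (l.map fun a => ctrlU P a U).prod
      = (∑ b ∈ l.toFinset, ketBraProj P b) ⊗ₖ U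
        + (1 - ∑ b ∈ l.toFinset, ketBraProj P b) ⊗ₖ (1 : Matrix γ γ ℂ) := by
  induction l with
  | nil => simp
  | cons a l ih =>
    obtain ⟨ha, hl⟩ := List.nodup_cons.mp hl
    have ha' : a ∉ l.toFinset := by simpa using ha
    have horth : ketBraProj P a * ∑ b ∈ l.toFinset, ketBraProj P b = 0 := by
      rw [Finset.mul_sum]
      refine Finset.sum_eq_zero fun b hb => ketBraProj_mul_of_ne P ?_
      rintro rfl
      exact ha' hb
    rw [List.map_cons, List.prod_cons, ih hl, ctrlU, ctrl_mul_of_orthogonal _ _ _ horth,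
      List.toFinset_cons, Finset.sum_insert ha']

/-- A subcube has one free bit for each coordinate outside `F`. -/
lemma card_subcube (P : ℕ) (F : Finset (Fin P)) (c : Fin P → Bool) :
    (Finset.univ.filter fun b : Fin P → Bool => ∀ i ∈ F, b i = c i).card = 2 ^ (P - F.card) := by
  have h : (Finset.univ.filter fun b : Fin P → Bool => ∀ i ∈ F, b i = c i)
      = Fintype.piFinset fun i => if i ∈ F then {c i} else Finset.univ := by
    ext b
    simp only [Finset.mem_filter, Finset.mem_univ, true_and, Fintype.mem_piFinset]
    refine forall_congr' fun i => ?_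
    by_cases hi : i ∈ F <;> simp [hi]
  rw [h, Fintype.card_piFinset]
  simp only [apply_ite Finset.card, Finset.card_singleton, Finset.card_univ, Fintype.card_bool]
  rw [Finset.prod_ite, Finset.prod_const_one, one_mul, Finset.prod_const]
  congr 1
  rw [show (Finset.univ.filter fun i => i ∉ F) = Fᶜ by ext; simp, Finset.card_compl,
    Fintype.card_fin]

/-- **Composition of controlled-`U` gates over a subcube of control strings.**
If the `2^n` control strings of `S` all agree on the `P - n` coordinates of `F`
(with common pattern `atil`), then the product over `S`, in any order, of the
gates `C_a(U)` equals `Q ⊗ U + (1 - Q) ⊗ 1`, where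
`Q = ∑_{b : b i = atil i ∀ i ∈ F} |b⟩⟨b|`: `2^n` controlled shifts combine into a
single shift controlled only on the fixed bits. -/
theorem ctrlU_composition_subcube
    (P n : ℕ) (hP : 1 ≤ P) (hn : 1 ≤ n) (hnP : n < P)
    {γ : Type*} [Fintype γ] [DecidableEq γ]
    (U : Matrix γ γ ℂ) (hU : U ∈ Matrix.unitaryGroup γ ℂ)
    (F : Finset (Fin P)) (hF : F.card = P - n)
    (S : Finset (Fin P → Bool)) (hScard : S.card = 2 ^ n)
    (atil : Fin P → Bool) (hagree : ∀ a ∈ S, ∀ i ∈ F, a i = atil i)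
    (l : List (Fin P → Bool)) (hl : l.Nodup) (hlS : l.toFinset = S) :
    (l.map fun a => ctrlU P a U).prod
      = (∑ b ∈ Finset.univ.filter fun b : Fin P → Bool => ∀ i ∈ F, b i = atil i,
            ketBraProj P b) ⊗ₖ U
        + (1 - ∑ b ∈ Finset.univ.filter fun b : Fin P → Bool => ∀ i ∈ F, b i = atil i,
            ketBraProj P b) ⊗ₖ 1 := by
  have hS : S = Finset.univ.filter fun b : Fin P → Bool => ∀ i ∈ F, b i = atil i := by
    refine Finset.eq_of_subset_of_card_le (fun a ha => by simpa using hagree a ha) ?_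
    rw [card_subcube, hScard, hF, Nat.sub_sub_self hnP.le]
  rw [prod_ctrlU P U l hl, hlS, hS]
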